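/- Suppose P has regularly varying tails: there exist α ∈ (0,1) and a function L : (0,∞) → (0,∞) slowly varying at infinity (i.e. L(tz)/L(t) → 1 as t → ∞ for every z > 0) such that F̄_P(x)/(x^{−α} L(1/x)) → 1 as x → 0. Then for every r ≥ 1, √(n^α L(n)) · ℓ(θ̂_r^{GT}(X_n), θ_r(P;X_n)) = O_P(1) as n → ∞; that is, for every δ > 0 there exist M > 0 and N ≥ 1 such that for all n ≥ N, P_P( √(n^α L(n)) · ℓ(θ̂_r^{GT}(X_n), θ_r(P;X_n)) > M ) ≤ δ. -/

import Mathlib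

open MeasureTheory ProbabilityTheory Real Filter

noncomputable section

/-- The law of an i.i.d. sample of size `n` from the discrete distribution `P` on `ℕ`. -/
def sampleMeasure (P : PMF ℕ) (n : ℕ) : Measure (Fin n → ℕ) :=
  Measure.pi fun _ => P.toMeasure

/-- The probability mass of symbol `j` under `P`, as a real number. -/
def pReal (P : PMF ℕ) (j : ℕ) : ℝ := (P j).toReal

/-- Empirical frequency of the symbol `j` in the sample `ω`. -/
def freq {n : ℕ} (ω : Fin n → ℕ) (j : ℕ) : ℕ :=
  (Finset.univ.filter fun i => ω i = j).card

/-- The `r`-order missing mass `θ_r(P; X_n)`. -/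
def missingMass (p : ℕ → ℝ) (r : ℕ) {n : ℕ} (ω : Fin n → ℕ) : ℝ :=
  ∑' j, p j ^ r * (if freq ω j = 0 then 1 else 0)

/-- `M_{n,r}`: the number of distinct symbols appearing exactly `r` times in the sample. -/
def Mcount {n : ℕ} (ω : Fin n → ℕ) (r : ℕ) : ℝ :=
  ∑' j, if freq ω j = r then 1 else 0

/-- The Good–Turing-type estimator `θ̂_r^{GT}(X_n) = M_{n,r} / (n choose r)`. -/
def gtEst {n : ℕ} (ω : Fin n → ℕ) (r : ℕ) : ℝ := Mcount ω r / (n.choose r)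

/-- The multiplicative (relative) loss: `ℓ(t, θ) = |t/θ - 1|` if `θ > 0`, and `h t` otherwise. -/
def mloss (h : ℝ → ℝ) (t θ : ℝ) : ℝ := if 0 < θ then |t / θ - 1| else h t

/-- The tail function `F̄_P(x) = #{j : p_j > x}`. -/
def tailF (P : PMF ℕ) (x : ℝ) : ℕ := Set.ncard {j | x < pReal P j}


lemma aux_pR_nonneg (P : PMF ℕ) (j : ℕ) : 0 ≤ pReal P j := ENNReal.toReal_nonneg

lemma aux_pR_hasSum (P : PMF ℕ) : HasSum (pReal P) 1 := by
  have h := ENNReal.hasSum_toReal (f := fun j => P j) (by rw [P.tsum_coe]; simp)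
  rw [← ENNReal.tsum_toReal_eq (fun a => P.apply_ne_top a), P.tsum_coe, ENNReal.toReal_one] at h
  exact h

lemma aux_pR_le_one (P : PMF ℕ) (j : ℕ) : pReal P j ≤ 1 :=
  le_hasSum (aux_pR_hasSum P) j (fun i _ => aux_pR_nonneg P i)

lemma aux_sum_le_one (P : PMF ℕ) (J : Finset ℕ) : ∑ j ∈ J, pReal P j ≤ 1 :=
  sum_le_hasSum J (fun i _ => aux_pR_nonneg P i) (aux_pR_hasSum P)

lemma aux_card_le (P : PMF ℕ) {x : ℝ} (J : Finset ℕ) (hJ : ∀ j ∈ J, x < pReal P j) :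
    (J.card : ℝ) * x ≤ 1 := by
  refine le_trans ?_ (aux_sum_le_one P J)
  rw [← nsmul_eq_mul]
  exact Finset.card_nsmul_le_sum J _ _ (fun j hj => (hJ j hj).le)

lemma aux_tail_finite (P : PMF ℕ) {x : ℝ} (hx : 0 < x) : {j | x < pReal P j}.Finite := by
  have h := (aux_pR_hasSum P).summable.tendsto_cofinite_zero
  have h2 := h.eventually (gt_mem_nhds hx)
  rw [Filter.eventually_cofinite] at h2
  have h3 : {j | ¬ pReal P j < x}.Finite := h2
  refine h3.subset ?_
  intro j hj
  simp only [Set.mem_ofPred_eq] at *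
  linarith

lemma aux_tailF_eq (P : PMF ℕ) {x : ℝ} (hx : 0 < x) :
    tailF P x = (aux_tail_finite P hx).toFinset.card := by
  unfold tailF
  rw [Set.ncard_eq_toFinset_card _ (aux_tail_finite P hx)]

lemma aux_tailF_ge (P : PMF ℕ) {x : ℝ} (hx : 0 < x) (J : Finset ℕ)
    (hJ : ∀ j ∈ J, x < pReal P j) : J.card ≤ tailF P x := by
  rw [aux_tailF_eq P hx]
  refine Finset.card_le_card ?_
  intro j hj
  simpa using hJ j hj

lemma aux_tailF_le (P : PMF ℕ) {x : ℝ} (hx : 0 < x) : (tailF P x : ℝ) * x ≤ 1 := by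
  rw [aux_tailF_eq P hx]
  refine aux_card_le P _ ?_
  intro j hj
  simpa using hj

lemma aux_tailF_anti (P : PMF ℕ) {x y : ℝ} (hx : 0 < x) (hxy : x ≤ y) :
    tailF P y ≤ tailF P x := by
  unfold tailF
  refine Set.ncard_le_ncard ?_ (aux_tail_finite P hx)
  intro j hj
  exact lt_of_le_of_lt hxy hj

lemma aux_ratio (P : PMF ℕ) (α : ℝ)
    (L : ℝ → ℝ) (hLpos : ∀ t > 0, 0 < L t)
    (hSlow : ∀ z > 0, Tendsto (fun t => L (t * z) / L t) atTop (nhds 1))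
    (hRV : Tendsto (fun x => (tailF P x : ℝ) / (x ^ (-α) * L (1 / x)))
      (nhdsWithin 0 (Set.Ioi 0)) (nhds 1)) (z : ℝ) (hz : 0 < z) :
    Tendsto (fun x => (tailF P (x * z) : ℝ) / (tailF P x : ℝ))
      (nhdsWithin 0 (Set.Ioi 0)) (nhds (z ^ (-α))) := by
  have h1 : Tendsto (fun x : ℝ => x * z) (nhdsWithin 0 (Set.Ioi 0)) (nhdsWithin 0 (Set.Ioi 0)) := by
    refine tendsto_nhdsWithin_of_tendsto_nhds_of_eventually_within _ ?_ ?_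
    · have : Tendsto (fun x : ℝ => x * z) (nhds 0) (nhds (0 * z)) := tendsto_id.mul_const z
      rw [zero_mul] at this
      exact this.mono_left nhdsWithin_le_nhds
    · filter_upwards [self_mem_nhdsWithin] with x hx
      exact mul_pos hx hz
  have h2 := hRV.comp h1
  have h3 : Tendsto (fun x : ℝ => L (x⁻¹ * z⁻¹) / L x⁻¹) (nhdsWithin 0 (Set.Ioi 0)) (nhds 1) :=
    (hSlow z⁻¹ (inv_pos.mpr hz)).comp tendsto_inv_nhdsGT_zero
  have h4 := ((h2.mul h3).mul_const (z ^ (-α))).div hRV one_ne_zero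
  simp only [one_mul, div_one] at h4
  refine h4.congr' ?_
  filter_upwards [self_mem_nhdsWithin] with x hx
  have hx : 0 < x := hx
  have e1 : (1 / (x * z)) = x⁻¹ * z⁻¹ := by field_simp
  have e2 : (x * z) ^ (-α) = x ^ (-α) * z ^ (-α) := Real.mul_rpow hx.le hz.le
  have p1 : 0 < L (x⁻¹ * z⁻¹) := hLpos _ (by positivity)
  have p2 : 0 < L (x⁻¹) := hLpos _ (by positivity)
  have p3 : 0 < x ^ (-α) := Real.rpow_pos_of_pos hx _
  have p4 : 0 < z ^ (-α) := Real.rpow_pos_of_pos hz _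
  simp only [Function.comp, Pi.div_apply, e1, e2, one_div x]
  generalize L (x⁻¹ * z⁻¹) = a at *
  generalize L x⁻¹ = b at *
  generalize x ^ (-α) = c at *
  generalize z ^ (-α) = d at *
  rcases eq_or_ne (tailF P x : ℝ) 0 with h0 | h0
  · simp [h0]
  · field_simp

lemma aux_Fv (P : PMF ℕ) (α : ℝ) (L : ℝ → ℝ)
    (hRV : Tendsto (fun x => (tailF P x : ℝ) / (x ^ (-α) * L (1 / x)))
      (nhdsWithin 0 (Set.Ioi 0)) (nhds 1)) :
    Tendsto (fun n : ℕ => (tailF P (n : ℝ)⁻¹ : ℝ) / ((n : ℝ) ^ α * L n)) atTop (nhds 1) := by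
  have h1 : Tendsto (fun n : ℕ => ((n : ℝ))⁻¹) atTop (nhdsWithin 0 (Set.Ioi 0)) :=
    tendsto_inv_atTop_nhdsGT_zero.comp tendsto_natCast_atTop_atTop
  refine (hRV.comp h1).congr' ?_
  filter_upwards [eventually_gt_atTop 0] with n hn
  simp only [Function.comp, one_div, inv_inv]
  rw [Real.inv_rpow (by positivity), Real.rpow_neg (by positivity), inv_inv]

/-- dyadic induction -/
lemma aux_dyadic (P : PMF ℕ) {lam x : ℝ} (hx : 0 < x) (hlam : 0 ≤ lam)
    (hF : ∀ y, 0 < y → y ≤ x → (tailF P (y * 2⁻¹) : ℝ) ≤ lam * tailF P y) (N : ℕ) (T : Finset ℕ) :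
    ∑ j ∈ T.filter (fun j => pReal P j ≤ x ∧ x * (2⁻¹) ^ N < pReal P j), pReal P j
      ≤ lam * x * tailF P x * ∑ i ∈ Finset.range N, (lam / 2) ^ i := by
  have key : ∀ i : ℕ, (tailF P (x * 2⁻¹ ^ i) : ℝ) ≤ lam ^ i * tailF P x := by
    intro i
    induction i with
    | zero => simp
    | succ i ih =>
      have hle : x * (2⁻¹ : ℝ) ^ i ≤ x :=
        mul_le_of_le_one_right hx.le (pow_le_one₀ (by norm_num) (by norm_num))
      have := hF (x * 2⁻¹ ^ i) (by positivity) hle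
      rw [pow_succ, ← mul_assoc]
      refine this.trans ?_
      rw [pow_succ, mul_comm (lam ^ i), mul_assoc]
      exact mul_le_mul_of_nonneg_left ih hlam
  induction N with
  | zero =>
    rw [Finset.filter_false_of_mem]
    · simp
    · intro j _ h
      simp at h
      linarith [h.1, h.2]
  | succ N ih =>
    have hsub : T.filter (fun j => pReal P j ≤ x ∧ x * (2⁻¹) ^ (N+1) < pReal P j) ⊆
      T.filter (fun j => pReal P j ≤ x ∧ x * (2⁻¹) ^ N < pReal P j) ∪
      T.filter (fun j => pReal P j ≤ x * 2⁻¹ ^ N ∧ x * (2⁻¹) ^ (N+1) < pReal P j) := by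
      intro j hj
      simp only [Finset.mem_filter, Finset.mem_union] at *
      rcases le_or_gt (pReal P j) (x * 2⁻¹ ^ N) with h | h
      · right; exact ⟨hj.1, h, hj.2.2⟩
      · left; exact ⟨hj.1, hj.2.1, h⟩
    refine (Finset.sum_le_sum_of_subset_of_nonneg hsub
      (fun j _ _ => aux_pR_nonneg P j)).trans ?_
    have hdisj : Disjoint (T.filter (fun j => pReal P j ≤ x ∧ x * (2⁻¹) ^ N < pReal P j))
      (T.filter (fun j => pReal P j ≤ x * 2⁻¹ ^ N ∧ x * (2⁻¹) ^ (N+1) < pReal P j)) := by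
      rw [Finset.disjoint_filter]
      intro j _ h1 h2
      linarith [h1.2, h2.1]
    rw [Finset.sum_union hdisj, Finset.sum_range_succ, mul_add]
    refine add_le_add ih ?_
    have h1 := Finset.sum_le_card_nsmul
      (T.filter (fun j => pReal P j ≤ x * 2⁻¹ ^ N ∧ x * (2⁻¹) ^ (N+1) < pReal P j)) (pReal P)
      (x * 2⁻¹ ^ N) (fun j hj => by simp only [Finset.mem_filter] at hj; exact hj.2.1)
    refine h1.trans ?_
    rw [nsmul_eq_mul]
    have h2 : ((T.filter (fun j => pReal P j ≤ x * 2⁻¹ ^ N ∧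
        x * (2⁻¹) ^ (N+1) < pReal P j)).card : ℝ) ≤ tailF P (x * 2⁻¹ ^ (N+1)) := by
      exact_mod_cast aux_tailF_ge P (by positivity) _
        (fun j hj => by simp only [Finset.mem_filter] at hj; exact hj.2.2)
    have h3 := h2.trans (key (N+1))
    calc _ ≤ (lam ^ (N+1) * tailF P x) * (x * 2⁻¹ ^ N) := by gcongr
      _ = _ := by rw [div_pow, inv_pow]; ring

lemma aux_small (P : PMF ℕ) {lam x : ℝ} (hx : 0 < x) (hlam : 0 ≤ lam) (hlam2 : lam < 2)
    (hF : ∀ y, 0 < y → y ≤ x → (tailF P (y * 2⁻¹) : ℝ) ≤ lam * tailF P y) (T : Finset ℕ) :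
    ∑ j ∈ T.filter (fun j => pReal P j ≤ x), pReal P j
      ≤ lam * x * tailF P x * (1 - lam / 2)⁻¹ := by
  -- sums over the positive part
  have hpos : ∑ j ∈ T.filter (fun j => pReal P j ≤ x), pReal P j
     = ∑ j ∈ T.filter (fun j => pReal P j ≤ x ∧ 0 < pReal P j), pReal P j := by
    symm
    refine Finset.sum_subset ?_ ?_
    · intro j hj; simp only [Finset.mem_filter] at *; exact ⟨hj.1, hj.2.1⟩
    · intro j hj h2
      simp only [Finset.mem_filter, not_and, not_lt] at *
      exact le_antisymm (h2 hj.1 hj.2) (aux_pR_nonneg P j)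
  have hN : ∃ N : ℕ, ∀ j ∈ T, 0 < pReal P j → x * (2⁻¹) ^ N < pReal P j := by
    have : ∀ᶠ N : ℕ in atTop, ∀ j ∈ T, 0 < pReal P j → x * (2⁻¹) ^ N < pReal P j := by
      rw [Filter.eventually_all_finset]
      intro j _
      by_cases h : 0 < pReal P j
      · have ht : Tendsto (fun N : ℕ => x * (2⁻¹ : ℝ) ^ N) atTop (nhds (x * 0)) :=
          (tendsto_pow_atTop_nhds_zero_of_lt_one (by norm_num) (by norm_num)).const_mul x
        rw [mul_zero] at ht
        filter_upwards [ht.eventually (gt_mem_nhds h)] with N hN _ using hN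
      · exact Filter.Eventually.of_forall (fun N h' => absurd h' h)
    exact this.exists
  obtain ⟨N, hN⟩ := hN
  rw [hpos]
  have hsub : T.filter (fun j => pReal P j ≤ x ∧ 0 < pReal P j) ⊆
      T.filter (fun j => pReal P j ≤ x ∧ x * (2⁻¹) ^ N < pReal P j) := by
    intro j hj
    simp only [Finset.mem_filter] at *
    exact ⟨hj.1, hj.2.1, hN j hj.1 hj.2.2⟩
  refine (Finset.sum_le_sum_of_subset_of_nonneg hsub
      (fun j _ _ => aux_pR_nonneg P j)).trans ?_
  refine (aux_dyadic P hx hlam hF N T).trans ?_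
  refine mul_le_mul_of_nonneg_left ?_ (by positivity)
  have hq : lam / 2 < 1 := by linarith
  rw [← tsum_geometric_of_lt_one (by positivity) hq]
  exact (summable_geometric_of_lt_one (by positivity) hq).sum_le_tsum _
    (fun i _ => by positivity)

lemma aux_pow_bound (k m : ℕ) (hm : 0 < m) {x : ℝ} (hx : 0 ≤ x) (hx1 : x ≤ 1) :
    x ^ k * (1 - x) ^ m ≤ k.factorial / (m : ℝ) ^ k := by
  have h1 : (x * m) ^ k / k.factorial ≤ Real.exp (x * m) :=
    Real.pow_div_factorial_le_exp _ (by positivity) k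
  have h2 : (1 - x) ^ m ≤ Real.exp (-(x * m)) := by
    have := Real.one_sub_le_exp_neg x
    calc (1 - x) ^ m ≤ (Real.exp (-x)) ^ m := pow_le_pow_left₀ (by linarith) this m
      _ = _ := by rw [← Real.exp_nat_mul]; congr 1; ring
  have hf : (0 : ℝ) < k.factorial := by exact_mod_cast k.factorial_pos
  have hmk : (0 : ℝ) < (m : ℝ) ^ k := by positivity
  rw [le_div_iff₀ hmk]
  rw [div_le_iff₀ hf] at h1
  calc x ^ k * (1 - x) ^ m * (m : ℝ) ^ k = (x * m) ^ k * (1 - x) ^ m := by rw [mul_pow]; ring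
    _ ≤ (Real.exp (x * m) * k.factorial) * Real.exp (-(x * m)) := by
        apply mul_le_mul h1 h2
        · exact pow_nonneg (by linarith) _
        · positivity
    _ = k.factorial := by
        rw [Real.exp_neg]; field_simp

/-- main upper bound on power sums -/
lemma aux_A (P : PMF ℕ) (α : ℝ) (hα : α ∈ Set.Ioo (0 : ℝ) 1)
    (L : ℝ → ℝ) (hLpos : ∀ t > 0, 0 < L t)
    (hSlow : ∀ z > 0, Tendsto (fun t => L (t * z) / L t) atTop (nhds 1))
    (hRV : Tendsto (fun x => (tailF P x : ℝ) / (x ^ (-α) * L (1 / x)))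
      (nhdsWithin 0 (Set.Ioi 0)) (nhds 1)) (r k : ℕ) (hk : 1 ≤ k) :
    ∃ C : ℝ, 0 ≤ C ∧ ∀ᶠ n : ℕ in atTop, ∀ J : Finset ℕ,
      ∑ j ∈ J, pReal P j ^ k * (1 - pReal P j) ^ (n - 2 * r) ≤
        C * ((n : ℝ) ^ α * L n) / (n : ℝ) ^ k := by
  obtain ⟨lam, hl1, hl2⟩ : ∃ lam : ℝ, (2⁻¹ : ℝ) ^ (-α) < lam ∧ lam < 2 := by
    apply exists_between
    rw [Real.inv_rpow (by norm_num), Real.rpow_neg (by norm_num), inv_inv]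
    calc (2 : ℝ) ^ α < 2 ^ (1 : ℝ) := Real.rpow_lt_rpow_of_exponent_lt (by norm_num) hα.2
      _ = 2 := by simp
  have hl0 : 0 ≤ lam := (Real.rpow_pos_of_pos (by norm_num : (0:ℝ) < 2⁻¹) (-α)).le.trans hl1.le
  have hr := aux_ratio P α L hLpos hSlow hRV 2⁻¹ (by norm_num)
  have hev := hr.eventually (gt_mem_nhds hl1)
  have hev0 := hRV.eventually (lt_mem_nhds (zero_lt_one))
  obtain ⟨x0, hx0, hsub⟩ := mem_nhdsGT_iff_exists_Ioc_subset.mp (hev.and hev0)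
  have hF : ∀ y, 0 < y → y ≤ x0 → (tailF P (y * 2⁻¹) : ℝ) ≤ lam * tailF P y := by
    intro y hy hy2
    obtain ⟨h1, h2⟩ := hsub ⟨hy, hy2⟩
    have hp : (0 : ℝ) < tailF P y := by
      rcases (Nat.cast_nonneg (tailF P y) : (0:ℝ) ≤ _).eq_or_lt with h | h
      · rw [← h] at h2; simp at h2
      · exact h
    rw [div_lt_iff₀ hp] at h1
    exact h1.le
  have hinv : Tendsto (fun n : ℕ => ((n : ℝ))⁻¹) atTop (nhdsWithin 0 (Set.Ioi 0)) :=
    tendsto_inv_atTop_nhdsGT_zero.comp tendsto_natCast_atTop_atTop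
  refine ⟨(k.factorial * 2 ^ k + lam * (1 - lam / 2)⁻¹) * 2, ?_, ?_⟩
  · have : 0 ≤ (1 - lam / 2)⁻¹ := inv_nonneg.mpr (by linarith)
    positivity
  filter_upwards [hinv (Ioc_mem_nhdsGT hx0), eventually_ge_atTop (4 * r + 1),
    (aux_Fv P α L hRV).eventually (gt_mem_nhds (one_lt_two))] with n hn hn2 hv J
  have hn0 : (0 : ℝ) < n := by exact_mod_cast (by omega : 0 < n)
  have hi0 : 0 < (n : ℝ)⁻¹ := inv_pos.mpr hn0
  have hvpos : 0 < (n : ℝ) ^ α * L n := mul_pos (Real.rpow_pos_of_pos hn0 _) (hLpos _ hn0)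
  rw [div_lt_iff₀ hvpos] at hv
  set v := (n : ℝ) ^ α * L n
  set Fn := (tailF P (n : ℝ)⁻¹ : ℝ) with hFn
  have hFn0 : 0 ≤ Fn := Nat.cast_nonneg _
  have hc : 0 ≤ (1 - lam / 2)⁻¹ := inv_nonneg.mpr (by linarith)
  -- split
  rw [← Finset.sum_filter_add_sum_filter_not J (fun j => pReal P j ≤ (n : ℝ)⁻¹)]
  have hsmall : ∑ j ∈ J.filter (fun j => pReal P j ≤ (n : ℝ)⁻¹),
      pReal P j ^ k * (1 - pReal P j) ^ (n - 2 * r) ≤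
      (lam * (1 - lam / 2)⁻¹) * Fn / (n : ℝ) ^ k := by
    have h1 : ∀ j ∈ J.filter (fun j => pReal P j ≤ (n : ℝ)⁻¹),
      pReal P j ^ k * (1 - pReal P j) ^ (n - 2 * r) ≤ ((n : ℝ)⁻¹) ^ (k - 1) * pReal P j := by
      intro j hj
      simp only [Finset.mem_filter] at hj
      have a1 := aux_pR_nonneg P j
      have a2 := aux_pR_le_one P j
      have : pReal P j ^ k = pReal P j ^ (k - 1) * pReal P j := by
        rw [← pow_succ]; congr 1; omega
      rw [this]
      calc pReal P j ^ (k - 1) * pReal P j * (1 - pReal P j) ^ (n - 2 * r)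
          ≤ pReal P j ^ (k - 1) * pReal P j * 1 := by
            gcongr
            exact pow_le_one₀ (by linarith) (by linarith)
        _ ≤ _ := by
            rw [mul_one]
            gcongr
            exact hj.2
    refine (Finset.sum_le_sum h1).trans ?_
    rw [← Finset.mul_sum]
    have h2 := aux_small P hi0 hl0 hl2 (fun y hy hy2 => hF y hy (hy2.trans hn.2)) J
    calc _ ≤ ((n : ℝ)⁻¹) ^ (k - 1) * (lam * (n : ℝ)⁻¹ * Fn * (1 - lam / 2)⁻¹) := by gcongr
      _ = (lam * (1 - lam / 2)⁻¹) * Fn * (((n : ℝ)⁻¹) ^ (k - 1) * (n : ℝ)⁻¹) := by ring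
      _ = _ := by
        rw [← pow_succ, Nat.sub_add_cancel hk, inv_pow]; rfl
  have hbig : ∑ j ∈ J.filter (fun j => ¬ pReal P j ≤ (n : ℝ)⁻¹),
      pReal P j ^ k * (1 - pReal P j) ^ (n - 2 * r) ≤
      (k.factorial * 2 ^ k) * Fn / (n : ℝ) ^ k := by
    have hm : (n : ℝ) / 2 ≤ ((n - 2 * r : ℕ) : ℝ) := by
      rw [div_le_iff₀ (by norm_num)]
      exact_mod_cast (by omega : n ≤ (n - 2 * r) * 2)
    have h1 : ∀ j ∈ J.filter (fun j => ¬ pReal P j ≤ (n : ℝ)⁻¹),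
      pReal P j ^ k * (1 - pReal P j) ^ (n - 2 * r) ≤ k.factorial * 2 ^ k / (n : ℝ) ^ k := by
      intro j _
      refine (aux_pow_bound k (n - 2 * r) (by omega) (aux_pR_nonneg P j)
        (aux_pR_le_one P j)).trans ?_
      calc (k.factorial : ℝ) / ((n - 2 * r : ℕ) : ℝ) ^ k ≤ k.factorial / ((n : ℝ) / 2) ^ k := by
            gcongr
        _ = _ := by rw [div_pow]; field_simp
    refine (Finset.sum_le_card_nsmul _ _ _ h1).trans ?_
    rw [nsmul_eq_mul]
    have hcard : ((J.filter (fun j => ¬ pReal P j ≤ (n : ℝ)⁻¹)).card : ℝ) ≤ Fn := by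
      rw [hFn]
      exact_mod_cast aux_tailF_ge P hi0 _
        (fun j hj => by simp only [Finset.mem_filter, not_le] at hj; exact hj.2)
    calc _ ≤ Fn * (k.factorial * 2 ^ k / (n : ℝ) ^ k) := by gcongr
      _ = _ := by ring
  calc _ ≤ (lam * (1 - lam / 2)⁻¹) * Fn / (n : ℝ) ^ k
        + (k.factorial * 2 ^ k) * Fn / (n : ℝ) ^ k := add_le_add hsmall hbig
    _ = (k.factorial * 2 ^ k + lam * (1 - lam / 2)⁻¹) * Fn / (n : ℝ) ^ k := by ring
    _ ≤ (k.factorial * 2 ^ k + lam * (1 - lam / 2)⁻¹) * (2 * v) / (n : ℝ) ^ k := by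
        gcongr
    _ = _ := by ring

/-- lower bound: many symbols in a window -/
lemma aux_window (P : PMF ℕ) (α : ℝ) (hα : α ∈ Set.Ioo (0 : ℝ) 1)
    (L : ℝ → ℝ) (hLpos : ∀ t > 0, 0 < L t)
    (hSlow : ∀ z > 0, Tendsto (fun t => L (t * z) / L t) atTop (nhds 1))
    (hRV : Tendsto (fun x => (tailF P x : ℝ) / (x ^ (-α) * L (1 / x)))
      (nhdsWithin 0 (Set.Ioi 0)) (nhds 1)) :
    ∃ c : ℝ, 0 < c ∧ Tendsto (fun n : ℕ => (n : ℝ) ^ α * L n) atTop atTop ∧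
    (∀ᶠ n : ℕ in atTop, (n : ℝ) ^ α * L n ≤ 2 * n) ∧
    ∀ᶠ n : ℕ in atTop, ∃ S : Finset ℕ,
      (∀ j ∈ S, c / n < pReal P j ∧ pReal P j ≤ (n : ℝ)⁻¹) ∧
      (n : ℝ) ^ α * L n ≤ S.card := by
  set c : ℝ := (4 : ℝ) ^ (-(1 / α)) with hc
  have hc0 : 0 < c := Real.rpow_pos_of_pos (by norm_num) _
  have hc1 : c < 1 := by
    apply Real.rpow_lt_one_of_one_lt_of_neg (by norm_num)
    have := hα.1
    have : 0 < 1 / α := by positivity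
    linarith
  have hcα : c ^ (-α) = 4 := by
    rw [hc, ← Real.rpow_mul (by norm_num)]
    have : -(1 / α) * -α = 1 := by have := hα.1.ne'; field_simp
    rw [this, Real.rpow_one]
  have hr := aux_ratio P α L hLpos hSlow hRV c hc0
  rw [hcα] at hr
  have hev := hr.eventually (lt_mem_nhds (by norm_num : (3 : ℝ) < 4))
  obtain ⟨x0, hx0, hsub⟩ := mem_nhdsGT_iff_exists_Ioc_subset.mp hev
  have hx0 : 0 < x0 := hx0
  have hpos : ∀ y, 0 < y → y ≤ x0 → (0 : ℝ) < tailF P y := by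
    intro y hy hy2
    have h1 := hsub ⟨hy, hy2⟩
    simp only [Set.mem_ofPred_eq] at h1
    rcases (Nat.cast_nonneg (tailF P y) : (0:ℝ) ≤ _).eq_or_lt with h | h
    · rw [← h] at h1; norm_num at h1
    · exact h
  have h3 : ∀ y, 0 < y → y ≤ x0 → 3 * (tailF P y : ℝ) ≤ tailF P (y * c) := by
    intro y hy hy2
    have h1 := hsub ⟨hy, hy2⟩
    simp only [Set.mem_ofPred_eq] at h1
    rw [lt_div_iff₀ (hpos y hy hy2)] at h1
    exact h1.le
  have hinv : Tendsto (fun n : ℕ => ((n : ℝ))⁻¹) atTop (nhdsWithin 0 (Set.Ioi 0)) :=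
    tendsto_inv_atTop_nhdsGT_zero.comp tendsto_natCast_atTop_atTop
  have hFv := aux_Fv P α L hRV
  have hgrow : ∀ i : ℕ, (3 : ℝ) ^ i ≤ tailF P (x0 * c ^ i) := by
    intro i
    induction i with
    | zero =>
      have := hpos x0 hx0 le_rfl
      simp only [pow_zero, mul_one]
      exact_mod_cast (by exact_mod_cast this : 0 < tailF P x0)
    | succ i ih =>
      have := h3 (x0 * c ^ i) (by positivity)
        (mul_le_of_le_one_right hx0.le (pow_le_one₀ hc0.le hc1.le))
      rw [pow_succ, pow_succ, ← mul_assoc]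
      linarith
  have hFinf : Tendsto (fun n : ℕ => (tailF P (n : ℝ)⁻¹ : ℝ)) atTop atTop := by
    rw [tendsto_atTop]
    intro b
    obtain ⟨i, hi⟩ := pow_unbounded_of_one_lt b (by norm_num : (1 : ℝ) < 3)
    filter_upwards [hinv (Ioc_mem_nhdsGT (by positivity : 0 < x0 * c ^ i))] with n hn
    refine hi.le.trans ((hgrow i).trans ?_)
    exact_mod_cast aux_tailF_anti P hn.1 hn.2
  have hvF : ∀ᶠ n : ℕ in atTop, (n : ℝ) ^ α * L n ≤ 2 * (tailF P (n : ℝ)⁻¹ : ℝ) ∧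
      (tailF P (n : ℝ)⁻¹ : ℝ) ≤ 2 * ((n : ℝ) ^ α * L n) := by
    filter_upwards [hFv.eventually (gt_mem_nhds (one_lt_two)),
      hFv.eventually (lt_mem_nhds (by norm_num : (2⁻¹ : ℝ) < 1)), eventually_gt_atTop 0]
      with n h1 h2 hn
    have hn0 : (0 : ℝ) < n := by exact_mod_cast hn
    have hvpos : 0 < (n : ℝ) ^ α * L n := mul_pos (Real.rpow_pos_of_pos hn0 _) (hLpos _ hn0)
    rw [div_lt_iff₀ hvpos] at h1
    rw [lt_div_iff₀ hvpos] at h2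
    constructor <;> linarith
  refine ⟨c, hc0, ?_, ?_, ?_⟩
  · refine tendsto_atTop_mono' atTop ?_ (hFinf.atTop_div_const (by norm_num : (0:ℝ) < 2))
    filter_upwards [hvF] with n hn
    linarith [hn.2]
  · filter_upwards [hvF, eventually_gt_atTop 0] with n hn hn0
    have hn0 : (0 : ℝ) < n := by exact_mod_cast hn0
    have := aux_tailF_le P (inv_pos.mpr hn0)
    rw [← div_eq_mul_inv, div_le_one hn0] at this
    linarith [hn.1]
  · filter_upwards [hvF, eventually_gt_atTop 0, hinv (Ioc_mem_nhdsGT hx0)] with n hn hn0 hnx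
    have hn0 : (0 : ℝ) < n := by exact_mod_cast hn0
    have hi : 0 < (n : ℝ)⁻¹ := inv_pos.mpr hn0
    have hic : 0 < (n : ℝ)⁻¹ * c := by positivity
    refine ⟨(aux_tail_finite P hic).toFinset \ (aux_tail_finite P hi).toFinset, ?_, ?_⟩
    · intro j hj
      simp only [Finset.mem_sdiff, Set.Finite.mem_toFinset, Set.mem_ofPred_eq, not_lt] at hj
      refine ⟨?_, hj.2⟩
      rw [div_eq_mul_inv, mul_comm]; exact hj.1
    · have hsub2 : (aux_tail_finite P hi).toFinset ⊆ (aux_tail_finite P hic).toFinset := by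
        intro j hj
        simp only [Set.Finite.mem_toFinset, Set.mem_ofPred_eq] at *
        refine lt_of_le_of_lt ?_ hj
        exact mul_le_of_le_one_right hi.le hc1.le
      have := Finset.card_sdiff_add_card_eq_card hsub2
      rw [← aux_tailF_eq P hi, ← aux_tailF_eq P hic] at this
      have h' : ((((aux_tail_finite P hic).toFinset \ (aux_tail_finite P hi).toFinset).card : ℕ) : ℝ)
        + tailF P (n : ℝ)⁻¹ = tailF P ((n : ℝ)⁻¹ * c) := by exact_mod_cast this
      have := h3 _ hnx.1 hnx.2
      linarith [hn.1]

instance aux_prob (P : PMF ℕ) (n : ℕ) : IsProbabilityMeasure (sampleMeasure P n) := by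
  unfold sampleMeasure; infer_instance

lemma aux_prod_eq {n : ℕ} (A B : Finset (Fin n)) (hAB : B ⊆ Aᶜ) (m : Set ℕ → ℝ)
    (U V W : Set ℕ) :
    ∏ k, m (if k ∈ A then U else if k ∈ B then V else W) =
      m U ^ A.card * m V ^ B.card * m W ^ (n - A.card - B.card) := by
  have h1 : ∀ k, m (if k ∈ A then U else if k ∈ B then V else W) =
      (if k ∈ A then m U else if k ∈ B then m V else m W) := by
    intro k; split_ifs <;> rfl
  simp_rw [h1]
  rw [Finset.prod_ite, Finset.prod_const, Finset.prod_ite, Finset.prod_const, Finset.prod_const]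
  have e1 : Finset.univ.filter (fun k => k ∈ A) = A := by ext; simp
  have e2 : (Finset.univ.filter (fun k => k ∉ A)).filter (fun k => k ∈ B) = B := by
    ext k; simp only [Finset.mem_filter, Finset.mem_univ, true_and]
    constructor
    · exact fun h => h.2
    · intro h; exact ⟨by simpa using hAB h, h⟩
  have e3 : (Finset.univ.filter (fun k => k ∉ A)).filter (fun k => k ∉ B) = (A ∪ B)ᶜ := by
    ext k; simp
  have hd : Disjoint A B := by
    rw [Finset.disjoint_left]; intro k hk hk2; simpa using (Finset.mem_compl.mp (hAB hk2) hk)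
  rw [e1, e2, e3, Finset.card_compl, Finset.card_union_of_disjoint hd, Fintype.card_fin, mul_assoc,
    Nat.sub_sub]

lemma aux_joint (P : PMF ℕ) (n : ℕ) (U V : Set ℕ) [DecidablePred (· ∈ U)] [DecidablePred (· ∈ V)]
    (hUV : Disjoint U V) (a b : ℕ) :
    (sampleMeasure P n).real {ω | (Finset.univ.filter fun k => ω k ∈ U).card = a ∧
      (Finset.univ.filter fun k => ω k ∈ V).card = b} =
    n.choose a * (n - a).choose b * (P.toMeasure.real U ^ a * P.toMeasure.real V ^ b *
      P.toMeasure.real (U ∪ V)ᶜ ^ (n - a - b)) := by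
  classical
  set E : (Σ _ : Finset (Fin n), Finset (Fin n)) → Set (Fin n → ℕ) := fun s =>
    Set.pi Set.univ (fun k => if k ∈ s.1 then U else if k ∈ s.2 then V else (U ∪ V)ᶜ) with hE
  set I := (Finset.powersetCard a (Finset.univ : Finset (Fin n))).sigma
    (fun A => Finset.powersetCard b Aᶜ) with hI
  have hmem : ∀ s ∈ I, ∀ ω, ω ∈ E s ↔ (Finset.univ.filter fun k => ω k ∈ U) = s.1 ∧
      (Finset.univ.filter fun k => ω k ∈ V) = s.2 := by
    rintro ⟨A, B⟩ hs ω
    simp only [hI, Finset.mem_sigma, Finset.mem_powersetCard, Finset.subset_univ, true_and] at hs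
    obtain ⟨hA, hB, hB2⟩ := hs
    simp only [hE, Set.mem_pi, Set.mem_univ, true_implies, Finset.ext_iff, Finset.mem_filter,
      Finset.mem_univ, true_and]
    have hd : ∀ x, x ∈ U → x ∉ V := fun x h1 h2 => Set.disjoint_left.mp hUV h1 h2
    have hBA : ∀ k, k ∈ B → k ∉ A := fun k hk => by simpa using hB hk
    constructor
    · intro h
      constructor
      · intro k
        have := h k
        have := fun h1 : ω k ∈ U => hd (ω k) h1
        have := hBA k
        by_cases h1 : k ∈ A <;> by_cases h2 : k ∈ B <;> by_cases h3 : ω k ∈ U <;> simp_all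
      · intro k
        have := h k
        have := hd (ω k)
        have := hBA k
        by_cases h1 : k ∈ A <;> by_cases h2 : k ∈ B <;> simp_all
    · rintro ⟨h1, h2⟩ k
      have := h1 k
      have := h2 k
      split_ifs <;> simp_all
  have hset : {ω : Fin n → ℕ | (Finset.univ.filter fun k => ω k ∈ U).card = a ∧
      (Finset.univ.filter fun k => ω k ∈ V).card = b} = ⋃ s ∈ I, E s := by
    ext ω
    simp only [Set.mem_ofPred_eq, Set.mem_iUnion, exists_prop]
    constructor
    · rintro ⟨h1, h2⟩
      have hs : (⟨Finset.univ.filter fun k => ω k ∈ U, Finset.univ.filter fun k => ω k ∈ V⟩ :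
        (Σ _ : Finset (Fin n), Finset (Fin n))) ∈ I := by
        simp only [hI, Finset.mem_sigma, Finset.mem_powersetCard, Finset.subset_univ, true_and]
        refine ⟨h1, ?_, h2⟩
        intro k hk
        simp only [Finset.mem_filter, Finset.mem_univ, true_and, Finset.mem_compl] at *
        exact fun h => Set.disjoint_left.mp hUV h hk
      exact ⟨_, hs, (hmem _ hs ω).mpr ⟨rfl, rfl⟩⟩
    · rintro ⟨s, hs, hω⟩
      obtain ⟨h1, h2⟩ := (hmem s hs ω).mp hω
      simp only [hI, Finset.mem_sigma, Finset.mem_powersetCard, Finset.subset_univ, true_and] at hs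
      rw [h1, h2]
      exact ⟨hs.1, hs.2.2⟩
  rw [hset, measureReal_biUnion_finset]
  · have : ∀ s ∈ I, (sampleMeasure P n).real (E s) = (P.toMeasure.real U ^ a *
        P.toMeasure.real V ^ b * P.toMeasure.real (U ∪ V)ᶜ ^ (n - a - b)) := by
      rintro ⟨A, B⟩ hs
      simp only [hI, Finset.mem_sigma, Finset.mem_powersetCard, Finset.subset_univ, true_and] at hs
      obtain ⟨hA, hB, hB2⟩ := hs
      simp only [hE, sampleMeasure, Measure.real, Measure.pi_pi, ENNReal.toReal_prod]
      have := aux_prod_eq A B hB (fun s => (P.toMeasure s).toReal) U V (U ∪ V)ᶜ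
      rw [this, hA, hB2]
    rw [Finset.sum_congr rfl this, Finset.sum_const, nsmul_eq_mul]
    congr 1
    rw [hI, Finset.card_sigma]
    have h2 : ∀ A ∈ Finset.powersetCard a (Finset.univ : Finset (Fin n)),
        (Finset.powersetCard b Aᶜ).card = (n - a).choose b := by
      intro A hA
      rw [Finset.mem_powersetCard] at hA
      rw [Finset.card_powersetCard, Finset.card_compl, Fintype.card_fin, hA.2]
    rw [Finset.sum_congr rfl h2, Finset.sum_const, Finset.card_powersetCard, Finset.card_univ,
      Fintype.card_fin, smul_eq_mul]
    push_cast; rfl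
  · intro s hs t ht hst
    rw [Function.onFun, Set.disjoint_left]
    intro ω h1 h2
    have a1 := (hmem s hs ω).mp h1
    have a2 := (hmem t ht ω).mp h2
    apply hst
    rcases s with ⟨s1, s2⟩
    rcases t with ⟨t1, t2⟩
    simp only at a1 a2
    rw [← a1.1, ← a1.2, ← a2.1, ← a2.2]
  · intro s _
    exact MeasurableSet.of_discrete

lemma aux_real_singleton (P : PMF ℕ) (j : ℕ) : P.toMeasure.real {j} = pReal P j := by
  rw [Measure.real, PMF.toMeasure_apply_singleton _ _ (MeasurableSet.singleton j)]; rfl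

lemma aux_pair (P : PMF ℕ) (n : ℕ) {i j : ℕ} (hij : i ≠ j) (a b : ℕ) :
    (sampleMeasure P n).real {ω | freq ω i = a ∧ freq ω j = b} =
    n.choose a * (n - a).choose b * (pReal P i ^ a * pReal P j ^ b *
      (1 - pReal P i - pReal P j) ^ (n - a - b)) := by
  have h := aux_joint P n {i} {j} (by simpa using hij) a b
  have h2 : P.toMeasure.real ({i} ∪ {j} : Set ℕ)ᶜ = 1 - pReal P i - pReal P j := by
    rw [probReal_compl_eq_one_sub MeasurableSet.of_discrete,
      measureReal_union (by simpa using hij) MeasurableSet.of_discrete,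
      aux_real_singleton, aux_real_singleton]
    ring
  rw [h2, aux_real_singleton, aux_real_singleton] at h
  simp only [Set.mem_singleton_iff] at h
  exact h

lemma aux_single (P : PMF ℕ) (n : ℕ) (i : ℕ) (a : ℕ) :
    (sampleMeasure P n).real {ω | freq ω i = a} =
    n.choose a * (pReal P i ^ a * (1 - pReal P i) ^ (n - a)) := by
  have h := aux_joint P n {i} ∅ (by simp) a 0
  have h2 : P.toMeasure.real ({i} ∪ ∅ : Set ℕ)ᶜ = 1 - pReal P i := by
    rw [Set.union_empty, probReal_compl_eq_one_sub MeasurableSet.of_discrete,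
      aux_real_singleton]
  rw [h2, aux_real_singleton] at h
  simpa [freq] using h

lemma aux_pq_le (P : PMF ℕ) {i j : ℕ} (hij : i ≠ j) : pReal P i + pReal P j ≤ 1 := by
  have := aux_sum_le_one P {i, j}
  rwa [Finset.sum_pair hij] at this

/-- indicator of frequency `a` at symbol `j` -/
def auxI {n : ℕ} (a j : ℕ) (ω : Fin n → ℕ) : ℝ := if freq ω j = a then 1 else 0

lemma auxI_nonneg {n : ℕ} (a j : ℕ) (ω : Fin n → ℕ) : 0 ≤ auxI a j ω := by
  unfold auxI; split_ifs <;> norm_num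

lemma auxI_le {n : ℕ} (a j : ℕ) (ω : Fin n → ℕ) : auxI a j ω ≤ 1 := by
  unfold auxI; split_ifs <;> norm_num

lemma auxI_mul_abs {n : ℕ} (a b i j : ℕ) (ω : Fin n → ℕ) : |auxI a i ω * auxI b j ω| ≤ 1 := by
  unfold auxI; split_ifs <;> norm_num

lemma aux_integrable (P : PMF ℕ) (n : ℕ) (f : (Fin n → ℕ) → ℝ) (C : ℝ) (hf : ∀ ω, |f ω| ≤ C) :
    Integrable f (sampleMeasure P n) :=
  Integrable.of_bound (Measurable.of_discrete).aestronglyMeasurable C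
    (Filter.Eventually.of_forall hf)

lemma auxI_int (P : PMF ℕ) (n a b i j : ℕ) :
    Integrable (fun ω : Fin n → ℕ => auxI a i ω * auxI b j ω) (sampleMeasure P n) :=
  aux_integrable P n _ 1 (auxI_mul_abs a b i j)

lemma auxI_integral2 (P : PMF ℕ) (n a b i j : ℕ) :
    ∫ ω, auxI a i ω * auxI b j ω ∂(sampleMeasure P n) =
      (sampleMeasure P n).real {ω | freq ω i = a ∧ freq ω j = b} := by
  rw [← integral_indicator_one MeasurableSet.of_discrete]
  congr 1
  ext ω
  by_cases h1 : freq ω i = a <;> by_cases h2 : freq ω j = b <;> simp [auxI, h1, h2]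

lemma auxI_integral1 (P : PMF ℕ) (n a i : ℕ) :
    ∫ ω, auxI a i ω ∂(sampleMeasure P n) =
      (sampleMeasure P n).real {ω | freq ω i = a} := by
  rw [← integral_indicator_one MeasurableSet.of_discrete]
  congr 1
  ext ω
  by_cases h1 : freq ω i = a <;> simp [auxI, h1]

lemma auxI_int1 (P : PMF ℕ) (n a i : ℕ) :
    Integrable (fun ω : Fin n → ℕ => auxI a i ω) (sampleMeasure P n) :=
  aux_integrable P n _ 1 (fun ω => by rw [abs_of_nonneg (auxI_nonneg _ _ _)]; exact auxI_le _ _ _)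

lemma aux_lin4 {Ω : Type*} [MeasurableSpace Ω] (μ : Measure Ω) (f1 f2 f3 f4 : Ω → ℝ)
    (i1 : Integrable f1 μ) (i2 : Integrable f2 μ) (i3 : Integrable f3 μ) (i4 : Integrable f4 μ) :
    ∫ ω, (f1 ω - f2 ω - f3 ω + f4 ω) ∂μ =
      ∫ ω, f1 ω ∂μ - ∫ ω, f2 ω ∂μ - ∫ ω, f3 ω ∂μ + ∫ ω, f4 ω ∂μ := by
  have i12 : Integrable (fun ω => f1 ω - f2 ω) μ := i1.sub i2
  have i123 : Integrable (fun ω => f1 ω - f2 ω - f3 ω) μ := i12.sub i3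
  rw [integral_add i123 i4, integral_sub i12 i3, integral_sub i1 i2]

/-- second moment of a finite sum -/
lemma aux_sq_sum (P : PMF ℕ) (n : ℕ) (J : Finset ℕ) (Z : ℕ → (Fin n → ℕ) → ℝ) (C : ℕ → ℝ)
    (hZ : ∀ j ω, |Z j ω| ≤ C j) :
    ∫ ω, (∑ j ∈ J, Z j ω) ^ 2 ∂(sampleMeasure P n) =
      ∑ i ∈ J, ∑ j ∈ J, ∫ ω, Z i ω * Z j ω ∂(sampleMeasure P n) := by
  have hIntg : ∀ i j, Integrable (fun ω => Z i ω * Z j ω) (sampleMeasure P n) := by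
    intro i j
    refine aux_integrable P n _ (C i * C j) (fun ω => ?_)
    rw [abs_mul]
    exact mul_le_mul (hZ i ω) (hZ j ω) (abs_nonneg _) ((abs_nonneg _).trans (hZ i ω))
  simp_rw [sq, Finset.sum_mul_sum]
  rw [integral_finsetSum _ (fun i _ => integrable_finsetSum _ (fun j _ => hIntg i j))]
  refine Finset.sum_congr rfl (fun i _ => ?_)
  rw [integral_finsetSum _ (fun j _ => hIntg i j)]

/-- lower-tail estimate for the number of unseen symbols in a window -/
lemma aux_W (P : PMF ℕ) (n : ℕ) (S : Finset ℕ) (κ : ℝ) (hκ : 0 < κ) (hS : 0 < S.card)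
    (hp : ∀ j ∈ S, κ ≤ (1 - pReal P j) ^ n) :
    (sampleMeasure P n).real {ω | ∑ j ∈ S, auxI 0 j ω < κ / 2 * S.card} ≤
      4 / (κ ^ 2 * S.card) := by
  have hvar : ∫ ω, (∑ j ∈ S, (auxI 0 j ω - (1 - pReal P j) ^ n)) ^ 2 ∂(sampleMeasure P n)
      ≤ S.card := by
    have hb : ∀ j, 0 ≤ (1 - pReal P j) ^ n ∧ (1 - pReal P j) ^ n ≤ 1 := fun j =>
      ⟨pow_nonneg (by linarith [aux_pR_le_one P j]) _,
        pow_le_one₀ (by linarith [aux_pR_le_one P j]) (by linarith [aux_pR_nonneg P j])⟩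
    rw [aux_sq_sum P n S (fun j ω => auxI 0 j ω - (1 - pReal P j) ^ n) (fun _ => 1)]
    · have hterm : ∀ i j, ∫ ω, (auxI 0 i ω - (1 - pReal P i) ^ n) *
          (auxI 0 j ω - (1 - pReal P j) ^ n) ∂(sampleMeasure P n) ≤ if i = j then 1 else 0 := by
        intro i j
        have e : ∀ ω : Fin n → ℕ, (auxI 0 i ω - (1 - pReal P i) ^ n) *
          (auxI 0 j ω - (1 - pReal P j) ^ n) = auxI 0 i ω * auxI 0 j ω
            - (1 - pReal P j) ^ n * auxI 0 i ω - (1 - pReal P i) ^ n * auxI 0 j ω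
            + (1 - pReal P i) ^ n * (1 - pReal P j) ^ n := by intro ω; ring
        simp_rw [e]
        rw [aux_lin4 _ _ _ _ _ (auxI_int P n 0 0 i j) ((auxI_int1 P n 0 i).const_mul _)
            ((auxI_int1 P n 0 j).const_mul _) (integrable_const _),
          integral_const_mul, integral_const_mul, integral_const, auxI_integral2,
          auxI_integral1, auxI_integral1, aux_single, aux_single]
        simp only [Nat.choose_zero_right, Nat.cast_one, pow_zero, one_mul, Nat.sub_zero,
          probReal_univ, one_smul]
        split_ifs with hij
        · subst hij
          simp only [and_self]
          rw [aux_single]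
          simp only [Nat.choose_zero_right, Nat.cast_one, pow_zero, one_mul, Nat.sub_zero]
          nlinarith [hb i]
        · rw [aux_pair P n hij]
          simp only [Nat.choose_zero_right, Nat.cast_one, pow_zero, one_mul, Nat.sub_zero]
          have h1 := aux_pq_le P hij
          have h2 : (1 - pReal P i - pReal P j) ^ n ≤ ((1 - pReal P i) * (1 - pReal P j)) ^ n := by
            refine pow_le_pow_left₀ (by linarith) ?_ n
            nlinarith [mul_nonneg (aux_pR_nonneg P i) (aux_pR_nonneg P j)]
          rw [mul_pow] at h2
          linarith
      refine (Finset.sum_le_sum (fun i _ => Finset.sum_le_sum (fun j _ => hterm i j))).trans ?_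
      simp
    · intro j ω
      rw [abs_le]
      have := auxI_nonneg 0 j ω
      have := auxI_le 0 j ω
      constructor <;> linarith [(hb j).1, (hb j).2]
  have hSr : (0 : ℝ) < S.card := by exact_mod_cast hS
  have hIntg : Integrable (fun ω : Fin n → ℕ =>
      (∑ j ∈ S, (auxI 0 j ω - (1 - pReal P j) ^ n)) ^ 2) (sampleMeasure P n) := by
    refine aux_integrable P n _ ((∑ j ∈ S, (1 + |(1 - pReal P j) ^ n|)) ^ 2) (fun ω => ?_)
    rw [abs_pow]
    refine pow_le_pow_left₀ (abs_nonneg _) ?_ 2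
    refine (Finset.abs_sum_le_sum_abs _ _).trans (Finset.sum_le_sum (fun j _ => ?_))
    refine (abs_sub _ _).trans ?_
    rw [abs_of_nonneg (auxI_nonneg 0 j ω)]
    linarith [auxI_le 0 j ω]
  have hmk := mul_meas_ge_le_integral_of_nonneg (μ := sampleMeasure P n)
    (Filter.Eventually.of_forall (fun ω => sq_nonneg
      (∑ j ∈ S, (auxI 0 j ω - (1 - pReal P j) ^ n)))) hIntg ((κ / 2 * S.card) ^ 2)
  have hsub : {ω : Fin n → ℕ | ∑ j ∈ S, auxI 0 j ω < κ / 2 * S.card} ⊆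
      {ω | (κ / 2 * S.card) ^ 2 ≤ (∑ j ∈ S, (auxI 0 j ω - (1 - pReal P j) ^ n)) ^ 2} := by
    intro ω hω
    simp only [Set.mem_ofPred_eq] at *
    rw [Finset.sum_sub_distrib]
    have h1 : (S.card : ℝ) * κ ≤ ∑ j ∈ S, (1 - pReal P j) ^ n := by
      rw [← nsmul_eq_mul]; exact Finset.card_nsmul_le_sum S _ _ hp
    have h2 : κ / 2 * S.card ≤ ∑ j ∈ S, (1 - pReal P j) ^ n - ∑ j ∈ S, auxI 0 j ω := by
      linarith
    have h3 : 0 ≤ κ / 2 * S.card := by positivity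
    nlinarith
  have h1 := measureReal_mono (μ := sampleMeasure P n) hsub
  rw [le_div_iff₀ (by positivity)]
  have h4 : (κ / 2 * S.card) ^ 2 * (sampleMeasure P n).real
      {ω | ∑ j ∈ S, auxI 0 j ω < κ / 2 * S.card} ≤ S.card := by
    refine le_trans ?_ (hmk.trans hvar)
    gcongr
  have h5 : (S.card : ℝ) * ((sampleMeasure P n).real
      {ω | ∑ j ∈ S, auxI 0 j ω < κ / 2 * S.card} * (κ ^ 2 * S.card)) ≤ S.card * 4 := by
    nlinarith
  exact le_of_mul_le_mul_left h5 hSr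

/-- the summand -/
def auxZ (P : PMF ℕ) (r : ℕ) {n : ℕ} (j : ℕ) (ω : Fin n → ℕ) : ℝ :=
  ((n.choose r : ℝ))⁻¹ * auxI r j ω - pReal P j ^ r * auxI 0 j ω

lemma auxZ_abs (P : PMF ℕ) (r : ℕ) {n : ℕ} (j : ℕ) (ω : Fin n → ℕ) :
    |auxZ P r j ω| ≤ ((n.choose r : ℝ))⁻¹ + pReal P j ^ r := by
  have h1 : 0 ≤ ((n.choose r : ℝ))⁻¹ := by positivity
  have h2 : 0 ≤ pReal P j ^ r := pow_nonneg (aux_pR_nonneg P j) _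
  have a1 := auxI_nonneg r j ω
  have a2 := auxI_le r j ω
  have a3 := auxI_nonneg 0 j ω
  have a4 := auxI_le 0 j ω
  unfold auxZ
  rw [abs_le]
  constructor <;> nlinarith

lemma auxZ_cov (P : PMF ℕ) (r n : ℕ) (i j : ℕ) :
    ∫ ω, auxZ P r i ω * auxZ P r j ω ∂(sampleMeasure P n) =
      ((n.choose r : ℝ))⁻¹ ^ 2 * (sampleMeasure P n).real {ω | freq ω i = r ∧ freq ω j = r}
      - (((n.choose r : ℝ))⁻¹ * pReal P j ^ r) *
          (sampleMeasure P n).real {ω | freq ω i = r ∧ freq ω j = 0}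
      - (((n.choose r : ℝ))⁻¹ * pReal P i ^ r) *
          (sampleMeasure P n).real {ω | freq ω i = 0 ∧ freq ω j = r}
      + (pReal P i ^ r * pReal P j ^ r) *
          (sampleMeasure P n).real {ω | freq ω i = 0 ∧ freq ω j = 0} := by
  have e : ∀ ω : Fin n → ℕ, auxZ P r i ω * auxZ P r j ω =
      ((n.choose r : ℝ))⁻¹ ^ 2 * (auxI r i ω * auxI r j ω)
      - (((n.choose r : ℝ))⁻¹ * pReal P j ^ r) * (auxI r i ω * auxI 0 j ω)
      - (((n.choose r : ℝ))⁻¹ * pReal P i ^ r) * (auxI 0 i ω * auxI r j ω)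
      + (pReal P i ^ r * pReal P j ^ r) * (auxI 0 i ω * auxI 0 j ω) := by
    intro ω; unfold auxZ; ring
  simp_rw [e]
  have i1 := (auxI_int P n r r i j).const_mul (((n.choose r : ℝ))⁻¹ ^ 2)
  have i2 := (auxI_int P n r 0 i j).const_mul (((n.choose r : ℝ))⁻¹ * pReal P j ^ r)
  have i3 := (auxI_int P n 0 r i j).const_mul (((n.choose r : ℝ))⁻¹ * pReal P i ^ r)
  have i4 := (auxI_int P n 0 0 i j).const_mul (pReal P i ^ r * pReal P j ^ r)
  rw [aux_lin4 _ _ _ _ _ i1 i2 i3 i4,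
    integral_const_mul, integral_const_mul, integral_const_mul, integral_const_mul,
    auxI_integral2, auxI_integral2, auxI_integral2, auxI_integral2]

lemma auxZ_diag (P : PMF ℕ) (r n : ℕ) (hn : 2 * r ≤ n) (i : ℕ) :
    ∫ ω, auxZ P r i ω * auxZ P r i ω ∂(sampleMeasure P n) ≤
      ((n.choose r : ℝ))⁻¹ * (pReal P i ^ r * (1 - pReal P i) ^ (n - 2 * r)) +
        pReal P i ^ (2 * r) * (1 - pReal P i) ^ (n - 2 * r) := by
  rw [auxZ_cov]
  simp only [and_self]
  rw [aux_single, aux_single]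
  have hc : (0 : ℝ) < n.choose r := by exact_mod_cast Nat.choose_pos (by omega)
  have p0 := aux_pR_nonneg P i
  have p1 := aux_pR_le_one P i
  have m1 : (1 - pReal P i) ^ (n - r) ≤ (1 - pReal P i) ^ (n - 2 * r) :=
    pow_le_pow_of_le_one (by linarith) (by linarith) (by omega)
  have m2 : (1 - pReal P i) ^ n ≤ (1 - pReal P i) ^ (n - 2 * r) :=
    pow_le_pow_of_le_one (by linarith) (by linarith) (by omega)
  have n1 : 0 ≤ (((n.choose r : ℝ))⁻¹ * pReal P i ^ r) *
          (sampleMeasure P n).real {ω | freq ω i = r ∧ freq ω i = 0} := by positivity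
  have n2 : 0 ≤ (((n.choose r : ℝ))⁻¹ * pReal P i ^ r) *
          (sampleMeasure P n).real {ω | freq ω i = 0 ∧ freq ω i = r} := by positivity
  have q1 : ((n.choose r : ℝ))⁻¹ ^ 2 * (n.choose r * (pReal P i ^ r * (1 - pReal P i) ^ (n - r)))
      ≤ ((n.choose r : ℝ))⁻¹ * (pReal P i ^ r * (1 - pReal P i) ^ (n - 2 * r)) := by
    have : ((n.choose r : ℝ))⁻¹ ^ 2 * (n.choose r * (pReal P i ^ r * (1 - pReal P i) ^ (n - r)))
      = ((n.choose r : ℝ))⁻¹ * (pReal P i ^ r * (1 - pReal P i) ^ (n - r)) := by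
      field_simp
    rw [this]
    gcongr
  have q2 : (pReal P i ^ r * pReal P i ^ r) * (n.choose 0 * (pReal P i ^ 0 *
      (1 - pReal P i) ^ (n - 0))) ≤ pReal P i ^ (2 * r) * (1 - pReal P i) ^ (n - 2 * r) := by
    simp only [Nat.choose_zero_right, Nat.cast_one, pow_zero, one_mul, Nat.sub_zero]
    rw [← pow_add, two_mul]
    rw [two_mul] at m2
    gcongr
  linarith

lemma auxZ_off (P : PMF ℕ) (r n : ℕ) (hn : 2 * r ≤ n) {i j : ℕ} (hij : i ≠ j) :
    ∫ ω, auxZ P r i ω * auxZ P r j ω ∂(sampleMeasure P n) ≤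
      2 * (r : ℝ) ^ 2 * (
        (pReal P i ^ (r + 2) * (1 - pReal P i) ^ (n - 2 * r)) *
          (pReal P j ^ r * (1 - pReal P j) ^ (n - 2 * r)) +
        (pReal P i ^ r * (1 - pReal P i) ^ (n - 2 * r)) *
          (pReal P j ^ (r + 2) * (1 - pReal P j) ^ (n - 2 * r))) := by
  rw [auxZ_cov, aux_pair P n hij, aux_pair P n hij, aux_pair P n hij, aux_pair P n hij]
  have hc : (0 : ℝ) < n.choose r := by exact_mod_cast Nat.choose_pos (by omega)
  have hc2 : ((n - r).choose r : ℝ) ≤ n.choose r := by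
    exact_mod_cast Nat.choose_le_choose r (by omega)
  have p0 := aux_pR_nonneg P i
  have q0 := aux_pR_nonneg P j
  have pq := aux_pq_le P hij
  generalize pReal P i = p at *
  generalize pReal P j = q at *
  simp only [Nat.choose_zero_right, Nat.cast_one, pow_zero, one_mul, mul_one, Nat.sub_zero]
  set s := 1 - p - q with hs
  have hs0 : 0 ≤ s := by linarith
  obtain ⟨m, rfl⟩ : ∃ m, n = m + 2 * r := ⟨n - 2 * r, by omega⟩
  have e1 : m + 2 * r - r - r = m := by omega
  have e2 : m + 2 * r - r = m + r := by omega
  have e3 : m + 2 * r - 2 * r = m := by omega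
  rw [e1, e2, e3]
  rw [e2] at hc2
  set c : ℝ := ((m + 2 * r).choose r : ℝ)
  have hber : 1 - s ^ r ≤ r * (p + q) := by
    have := one_add_mul_le_pow (a := s - 1) (by linarith) r
    have e : 1 + (s - 1) = s := by ring
    rw [e] at this
    have : (r : ℝ) * (s - 1) = - (r * (p + q)) := by rw [hs]; ring
    linarith
  have hber0 : 0 ≤ 1 - s ^ r := by
    have : s ^ r ≤ 1 := pow_le_one₀ hs0 (by linarith)
    linarith
  have hsm : s ^ m ≤ (1 - p) ^ m * (1 - q) ^ m := by
    rw [← mul_pow]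
    refine pow_le_pow_left₀ hs0 ?_ m
    nlinarith [mul_nonneg p0 q0]
  have hsm0 : 0 ≤ s ^ m := pow_nonneg hs0 _
  have step1 : c⁻¹ ^ 2 * (c * ((m + r).choose r : ℝ) * (p ^ r * q ^ r * s ^ m))
      - c⁻¹ * q ^ r * (c * (p ^ r * s ^ (m + r)))
      - c⁻¹ * p ^ r * (c * (q ^ r * s ^ (m + r)))
      + p ^ r * q ^ r * s ^ (m + 2 * r)
      = p ^ r * q ^ r * s ^ m * (((m + r).choose r : ℝ) / c - 2 * s ^ r + (s ^ r) ^ 2) := by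
    field_simp
    ring
  have hfrac : ((m + r).choose r : ℝ) / c ≤ 1 := by rw [div_le_one hc]; exact hc2
  have step2 : ((m + r).choose r : ℝ) / c - 2 * s ^ r + (s ^ r) ^ 2 ≤
      2 * (r : ℝ) ^ 2 * (p ^ 2 + q ^ 2) := by
    have h1 : (1 - s ^ r) ^ 2 ≤ (r * (p + q)) ^ 2 := pow_le_pow_left₀ hber0 hber 2
    nlinarith [mul_nonneg (sq_nonneg (r : ℝ)) (sq_nonneg (p - q))]
  have hp1 : 0 ≤ 1 - p := by linarith
  have hq1 : 0 ≤ 1 - q := by linarith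
  calc _ = p ^ r * q ^ r * s ^ m * (((m + r).choose r : ℝ) / c - 2 * s ^ r + (s ^ r) ^ 2) := step1
    _ ≤ p ^ r * q ^ r * s ^ m * (2 * (r : ℝ) ^ 2 * (p ^ 2 + q ^ 2)) := by gcongr
    _ ≤ p ^ r * q ^ r * ((1 - p) ^ m * (1 - q) ^ m) * (2 * (r : ℝ) ^ 2 * (p ^ 2 + q ^ 2)) := by
        gcongr
    _ = _ := by ring

lemma auxZ_second (P : PMF ℕ) (r n : ℕ) (hn : 2 * r ≤ n) (J : Finset ℕ) :
    ∫ ω, (∑ j ∈ J, auxZ P r j ω) ^ 2 ∂(sampleMeasure P n) ≤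
      ((n.choose r : ℝ))⁻¹ * (∑ j ∈ J, pReal P j ^ r * (1 - pReal P j) ^ (n - 2 * r)) +
      (∑ j ∈ J, pReal P j ^ (2 * r) * (1 - pReal P j) ^ (n - 2 * r)) +
      4 * (r : ℝ) ^ 2 * ((∑ j ∈ J, pReal P j ^ (r + 2) * (1 - pReal P j) ^ (n - 2 * r)) *
        (∑ j ∈ J, pReal P j ^ r * (1 - pReal P j) ^ (n - 2 * r))) := by
  rw [aux_sq_sum P n J (fun j ω => auxZ P r j ω) _ (fun j ω => auxZ_abs P r j ω)]
  set f : ℕ → ℕ → ℝ := fun k j => pReal P j ^ k * (1 - pReal P j) ^ (n - 2 * r) with hf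
  have hf0 : ∀ k j, 0 ≤ f k j := fun k j =>
    mul_nonneg (pow_nonneg (aux_pR_nonneg P j) _) (pow_nonneg (by linarith [aux_pR_le_one P j]) _)
  have hterm : ∀ i j, ∫ ω, auxZ P r i ω * auxZ P r j ω ∂(sampleMeasure P n) ≤
      (if i = j then (((n.choose r : ℝ))⁻¹ * f r i + f (2 * r) i) else 0) +
      2 * (r : ℝ) ^ 2 * (f (r + 2) i * f r j + f r i * f (r + 2) j) := by
    intro i j
    have h0 : 0 ≤ 2 * (r : ℝ) ^ 2 * (f (r + 2) i * f r j + f r i * f (r + 2) j) := by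
      have := mul_nonneg (hf0 (r + 2) i) (hf0 r j)
      have := mul_nonneg (hf0 r i) (hf0 (r + 2) j)
      positivity
    split_ifs with h
    · subst h
      have := auxZ_diag P r n hn i
      simp only [hf] at *
      linarith
    · rw [zero_add]; exact auxZ_off P r n hn h
  refine (Finset.sum_le_sum (fun i _ => Finset.sum_le_sum (fun j _ => hterm i j))).trans ?_
  apply le_of_eq
  change _ = ((n.choose r : ℝ))⁻¹ * (∑ j ∈ J, f r j) + (∑ j ∈ J, f (2 * r) j) +
     4 * (r : ℝ) ^ 2 * ((∑ j ∈ J, f (r + 2) j) * (∑ j ∈ J, f r j))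
  simp_rw [Finset.sum_add_distrib, ← Finset.mul_sum, Finset.sum_add_distrib]
  rw [← Finset.sum_mul_sum, ← Finset.sum_mul_sum]
  have : ∑ i ∈ J, ∑ j ∈ J, (if i = j then (((n.choose r : ℝ))⁻¹ * f r i + f (2 * r) i) else 0)
      = ((n.choose r : ℝ))⁻¹ * (∑ j ∈ J, f r j) + (∑ j ∈ J, f (2 * r) j) := by
    rw [Finset.mul_sum, ← Finset.sum_add_distrib]
    refine Finset.sum_congr rfl (fun i hi => ?_)
    simp [hi]
  rw [this]
  ring

lemma aux_missing_summable (P : PMF ℕ) (r : ℕ) (hr : 1 ≤ r) {n : ℕ} (ω : Fin n → ℕ) :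
    Summable (fun j => pReal P j ^ r * auxI 0 j ω) := by
  refine Summable.of_nonneg_of_le (fun j => ?_) (fun j => ?_) (aux_pR_hasSum P).summable
  · exact mul_nonneg (pow_nonneg (aux_pR_nonneg P j) _) (auxI_nonneg _ _ _)
  · calc pReal P j ^ r * auxI 0 j ω ≤ pReal P j ^ r * 1 := by
          have := pow_nonneg (aux_pR_nonneg P j) r
          have := auxI_le 0 j ω
          gcongr
      _ = pReal P j ^ r := mul_one _
      _ ≤ pReal P j := pow_le_of_le_one (aux_pR_nonneg P j) (aux_pR_le_one P j) (by omega)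

lemma aux_Z_hasSum (P : PMF ℕ) (r : ℕ) (hr : 1 ≤ r) {n : ℕ} (ω : Fin n → ℕ) :
    HasSum (fun j => auxZ P r j ω) (gtEst ω r - missingMass (pReal P) r ω) := by
  have h1 : Summable (fun j => auxI r j ω) := by
    refine summable_of_hasFiniteSupport ((Set.finite_range ω).subset ?_)
    intro j hj
    by_contra hcon
    apply hj
    have : freq ω j = 0 := by
      unfold freq
      rw [Finset.card_eq_zero, Finset.filter_eq_empty_iff]
      intro k _ hk
      exact hcon ⟨k, hk⟩
    simp only [auxI, this]
    rw [if_neg (by omega)]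
  have h2 := (h1.hasSum.mul_left ((n.choose r : ℝ))⁻¹).sub (aux_missing_summable P r hr ω).hasSum
  have e : gtEst ω r - missingMass (pReal P) r ω =
      ((n.choose r : ℝ))⁻¹ * (∑' j, auxI r j ω) - ∑' j, pReal P j ^ r * auxI 0 j ω := by
    unfold gtEst Mcount missingMass auxI
    rw [div_eq_inv_mul]
  rw [e]
  exact h2

lemma aux_D_lintegral (P : PMF ℕ) (r : ℕ) (hr : 1 ≤ r) (n : ℕ) (B : ℝ)
    (hB : ∀ J : Finset ℕ, ∫ ω, (∑ j ∈ J, auxZ P r j ω) ^ 2 ∂(sampleMeasure P n) ≤ B) :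
    ∫⁻ ω, ENNReal.ofReal ((gtEst ω r - missingMass (pReal P) r ω) ^ 2) ∂(sampleMeasure P n) ≤
      ENNReal.ofReal B := by
  have hlim : ∀ ω : Fin n → ℕ, ENNReal.ofReal ((gtEst ω r - missingMass (pReal P) r ω) ^ 2) =
      liminf (fun N : ℕ => ENNReal.ofReal ((∑ j ∈ Finset.range N, auxZ P r j ω) ^ 2)) atTop := by
    intro ω
    symm
    apply Tendsto.liminf_eq
    exact ENNReal.tendsto_ofReal (((aux_Z_hasSum P r hr ω).tendsto_sum_nat).pow 2)
  simp_rw [hlim]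
  refine (lintegral_liminf_le (fun N => Measurable.of_discrete)).trans ?_
  refine Filter.liminf_le_of_le (by isBoundedDefault) ?_
  intro b hb
  obtain ⟨N, hN⟩ := hb.exists
  refine hN.trans ?_
  rw [← ofReal_integral_eq_lintegral_ofReal]
  · exact ENNReal.ofReal_le_ofReal (hB _)
  · refine aux_integrable P n _ ((∑ j ∈ Finset.range N, (((n.choose r : ℝ))⁻¹ + pReal P j ^ r)) ^ 2)
      (fun ω => ?_)
    rw [abs_pow]
    refine pow_le_pow_left₀ (abs_nonneg _) ?_ 2
    exact (Finset.abs_sum_le_sum_abs _ _).trans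
      (Finset.sum_le_sum (fun j _ => auxZ_abs P r j ω))
  · exact Filter.Eventually.of_forall (fun ω => sq_nonneg _)

lemma aux_choose_inv (r n : ℕ) (hn : 2 * r ≤ n) (hn0 : 0 < n) :
    ((n.choose r : ℝ))⁻¹ ≤ r.factorial * 2 ^ r / (n : ℝ) ^ r := by
  have h := Nat.pow_le_choose (α := ℝ) r n
  have hn1 : (0 : ℝ) < n := by exact_mod_cast hn0
  have h2 : (n : ℝ) / 2 ≤ ((n + 1 - r : ℕ) : ℝ) := by
    rw [div_le_iff₀ (by norm_num)]
    exact_mod_cast (by omega : n ≤ (n + 1 - r) * 2)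
  have hf : (0 : ℝ) < r.factorial := by exact_mod_cast r.factorial_pos
  have h3 : ((n : ℝ) / 2) ^ r / r.factorial ≤ n.choose r := by
    refine le_trans ?_ h
    gcongr
  have h4 := inv_anti₀ (by positivity) h3
  refine h4.trans (le_of_eq ?_)
  rw [div_pow]
  field_simp

lemma aux_second_bound (P : PMF ℕ) (α : ℝ) (hα : α ∈ Set.Ioo (0 : ℝ) 1)
    (L : ℝ → ℝ) (hLpos : ∀ t > 0, 0 < L t)
    (hSlow : ∀ z > 0, Tendsto (fun t => L (t * z) / L t) atTop (nhds 1))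
    (hRV : Tendsto (fun x => (tailF P x : ℝ) / (x ^ (-α) * L (1 / x)))
      (nhdsWithin 0 (Set.Ioi 0)) (nhds 1)) (r : ℕ) (hr : 1 ≤ r)
    (hv : ∀ᶠ n : ℕ in atTop, (n : ℝ) ^ α * L n ≤ 2 * n) :
    ∃ C : ℝ, 0 < C ∧ ∀ᶠ n : ℕ in atTop, ∀ J : Finset ℕ,
      ∫ ω, (∑ j ∈ J, auxZ P r j ω) ^ 2 ∂(sampleMeasure P n) ≤
        C * ((n : ℝ) ^ α * L n) / ((n : ℝ) ^ r) ^ 2 := by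
  obtain ⟨C1, hC1, h1⟩ := aux_A P α hα L hLpos hSlow hRV r r hr
  obtain ⟨C2, hC2, h2⟩ := aux_A P α hα L hLpos hSlow hRV r (2 * r) (by omega)
  obtain ⟨C3, hC3, h3⟩ := aux_A P α hα L hLpos hSlow hRV r (r + 2) (by omega)
  refine ⟨r.factorial * 2 ^ r * C1 + C2 + 8 * (r : ℝ) ^ 2 * (C3 * C1) + 1, by positivity, ?_⟩
  filter_upwards [h1, h2, h3, hv, eventually_ge_atTop (2 * r), eventually_gt_atTop 0]
    with n h1 h2 h3 hv hn hn0 J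
  have h1 := h1 J
  have h2 := h2 J
  have h3 := h3 J
  have hn1 : (1 : ℝ) ≤ n := by exact_mod_cast hn0
  have hnp : (0 : ℝ) < n := by linarith
  have hvpos : 0 < (n : ℝ) ^ α * L n := mul_pos (Real.rpow_pos_of_pos hnp _) (hLpos _ hnp)
  refine (auxZ_second P r n hn J).trans ?_
  set v := (n : ℝ) ^ α * L n
  have hA0 : ∀ k, 0 ≤ ∑ j ∈ J, pReal P j ^ k * (1 - pReal P j) ^ (n - 2 * r) := fun k =>
    Finset.sum_nonneg (fun j _ => mul_nonneg (pow_nonneg (aux_pR_nonneg P j) _)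
      (pow_nonneg (by linarith [aux_pR_le_one P j]) _))
  have a1 := mul_le_mul (aux_choose_inv r n hn hn0) h1 (hA0 r) (by positivity)
  have a3 := mul_le_mul h3 h1 (hA0 r) (by positivity)
  have hvn : v / (n : ℝ) ^ 2 ≤ 2 := by
    rw [div_le_iff₀ (by positivity)]; nlinarith
  set N := (n : ℝ) ^ r with hN
  have hNp : 0 < N := by positivity
  have e2 : (n : ℝ) ^ (2 * r) = N ^ 2 := by rw [hN, ← pow_mul, mul_comm]
  have e3 : (n : ℝ) ^ (r + 2) = N * (n : ℝ) ^ 2 := by rw [hN, ← pow_add]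
  rw [e2] at h2
  rw [e3] at a3
  have b3 : C3 * v / (N * (n : ℝ) ^ 2) * (C1 * v / N) ≤ 2 * (C3 * C1) * v / N ^ 2 := by
    have : C3 * v / (N * (n : ℝ) ^ 2) * (C1 * v / N) = (v / (n : ℝ) ^ 2) * (C3 * C1) * v / N ^ 2 := by
      field_simp
    rw [this]
    gcongr
  have b1 : r.factorial * 2 ^ r / N * (C1 * v / N) = r.factorial * 2 ^ r * C1 * v / N ^ 2 := by
    field_simp
  have hvN : 0 ≤ v / N ^ 2 := by positivity
  calc _ ≤ r.factorial * 2 ^ r * C1 * v / N ^ 2 + C2 * v / N ^ 2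
        + 4 * (r : ℝ) ^ 2 * (2 * (C3 * C1) * v / N ^ 2) := by
        refine add_le_add (add_le_add (b1 ▸ a1) h2) ?_
        exact mul_le_mul_of_nonneg_left (a3.trans b3) (by positivity)
    _ = (r.factorial * 2 ^ r * C1 + C2 + 8 * (r : ℝ) ^ 2 * (C3 * C1)) * v / N ^ 2 := by ring
    _ ≤ (r.factorial * 2 ^ r * C1 + C2 + 8 * (r : ℝ) ^ 2 * (C3 * C1)) * v / N ^ 2 + v / N ^ 2 := by
        linarith
    _ = _ := by ring

lemma aux_exp_bound (n : ℕ) (hn : 2 ≤ n) (p : ℝ) (hp : p ≤ (n : ℝ)⁻¹) :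
    Real.exp (-2) ≤ (1 - p) ^ n := by
  have hn2 : (2 : ℝ) ≤ n := by exact_mod_cast hn
  have hn0 : (0 : ℝ) < n := by linarith
  have hi : (n : ℝ)⁻¹ ≤ 2⁻¹ := inv_anti₀ (by norm_num) hn2
  have hi0 : 0 < (n : ℝ)⁻¹ := by positivity
  set x := (n : ℝ)⁻¹ with hx
  have h1 : Real.exp (-(2 * x)) ≤ 1 - x := by
    rw [Real.exp_neg]
    have h2 : 1 + 2 * x ≤ Real.exp (2 * x) := by linarith [Real.add_one_le_exp (2 * x)]
    have h3 : (Real.exp (2 * x))⁻¹ ≤ (1 + 2 * x)⁻¹ := inv_anti₀ (by positivity) h2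
    refine h3.trans ?_
    rw [inv_le_iff_one_le_mul₀ (by positivity)]
    nlinarith
  calc Real.exp (-2) = Real.exp (-(2 * x)) ^ n := by
        rw [← Real.exp_nat_mul]; congr 1; rw [hx]; field_simp
    _ ≤ (1 - p) ^ n := pow_le_pow_left₀ (Real.exp_pos _).le (by linarith) n

/-- If `P` has regularly varying tails with index `α ∈ (0,1)` and slowly varying part `L`,
then `√(n^α L(n)) · ℓ(θ̂_r^{GT}(X_n), θ_r(P;X_n)) = O_P(1)` as `n → ∞`. -/
theorem gtEst_consistent_regularly_varying (P : PMF ℕ) (α : ℝ) (hα : α ∈ Set.Ioo (0 : ℝ) 1)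
    (L : ℝ → ℝ) (hLpos : ∀ t > 0, 0 < L t)
    (hSlow : ∀ z > 0, Tendsto (fun t => L (t * z) / L t) atTop (nhds 1))
    (hRV : Tendsto (fun x => (tailF P x : ℝ) / (x ^ (-α) * L (1 / x)))
      (nhdsWithin 0 (Set.Ioi 0)) (nhds 1))
    (r : ℕ) (hr : 1 ≤ r) (h : ℝ → ℝ) (δ : ℝ) (hδ : 0 < δ) :
    ∃ M > (0 : ℝ), ∃ N : ℕ, ∀ n ≥ N,
      sampleMeasure P n
        {ω | Real.sqrt ((n : ℝ) ^ α * L n) *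
              mloss h (gtEst ω r) (missingMass (pReal P) r ω) > M}
        ≤ ENNReal.ofReal δ := by
  obtain ⟨c, hc0, hvinf, hv2, hwin⟩ := aux_window P α hα L hLpos hSlow hRV
  obtain ⟨C, hC0, hsec⟩ := aux_second_bound P α hα L hLpos hSlow hRV r hr hv2
  set κ : ℝ := Real.exp (-2) with hκdef
  have hκ : 0 < κ := Real.exp_pos _
  set K : ℝ := 2 * C / δ with hK
  have hK0 : 0 < K := by positivity
  set c' : ℝ := c ^ r * (κ / 2) with hc'
  have hc'0 : 0 < c' := by positivity
  refine ⟨Real.sqrt K / c', by positivity, ?_⟩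
  rw [← Filter.eventually_atTop]
  filter_upwards [hsec, hwin, eventually_ge_atTop 2,
    hvinf.eventually_ge_atTop (8 / (κ ^ 2 * δ))] with n hsec hwin hn2 hvbig
  obtain ⟨S, hS, hScard⟩ := hwin
  have hn0 : (0 : ℝ) < n := by exact_mod_cast (by omega : 0 < n)
  have hvpos : 0 < (n : ℝ) ^ α * L n := mul_pos (Real.rpow_pos_of_pos hn0 _) (hLpos _ hn0)
  set v := (n : ℝ) ^ α * L n
  have hSr : (0 : ℝ) < S.card := hvpos.trans_le hScard
  have hS0 : 0 < S.card := by exact_mod_cast hSr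
  set N := (n : ℝ) ^ r with hN
  have hNp : 0 < N := by positivity
  have hWb := aux_W P n S κ hκ hS0 (fun j hj => aux_exp_bound n hn2 _ (hS j hj).2)
  set bad1 : Set (Fin n → ℕ) := {ω | ∑ j ∈ S, auxI 0 j ω < κ / 2 * S.card} with hbad1
  set bad2 : Set (Fin n → ℕ) := {ω | ENNReal.ofReal (K * v / N ^ 2) ≤
    ENNReal.ofReal ((gtEst ω r - missingMass (pReal P) r ω) ^ 2)} with hbad2
  have m1 : sampleMeasure P n bad1 ≤ ENNReal.ofReal (δ / 2) := by
    rw [← ofReal_measureReal]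
    apply ENNReal.ofReal_le_ofReal
    refine hWb.trans ?_
    have : 8 / (κ ^ 2 * δ) ≤ S.card := hvbig.trans hScard
    rw [div_le_iff₀ (by positivity)] at this
    rw [div_le_iff₀ (by positivity)]
    linarith
  have m2 : sampleMeasure P n bad2 ≤ ENNReal.ofReal (δ / 2) := by
    have hKv : 0 < K * v / N ^ 2 := by positivity
    refine (meas_ge_le_lintegral_div (Measurable.of_discrete).aemeasurable
      (by simpa using hKv) ENNReal.ofReal_ne_top).trans ?_
    rw [ENNReal.div_le_iff (by simpa using hKv) ENNReal.ofReal_ne_top]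
    refine (aux_D_lintegral P r hr n _ hsec).trans ?_
    rw [← ENNReal.ofReal_mul (by positivity)]
    apply ENNReal.ofReal_le_ofReal
    apply le_of_eq
    rw [hK]
    field_simp
  have hsub : {ω : Fin n → ℕ | Real.sqrt v *
      mloss h (gtEst ω r) (missingMass (pReal P) r ω) > Real.sqrt K / c'} ⊆ bad1 ∪ bad2 := by
    intro ω hω
    by_contra hcon
    simp only [hbad1, hbad2, Set.mem_union, Set.mem_ofPred_eq, not_or, not_lt, not_le] at hcon
    obtain ⟨g1, g2⟩ := hcon
    rw [ENNReal.ofReal_lt_ofReal_iff_of_nonneg (by positivity)] at g2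
    have hθ : c' * v / N ≤ missingMass (pReal P) r ω := by
      have t1 : ∑ j ∈ S, pReal P j ^ r * auxI 0 j ω ≤ missingMass (pReal P) r ω :=
        (aux_missing_summable P r hr ω).sum_le_tsum S
          (fun j _ => mul_nonneg (pow_nonneg (aux_pR_nonneg P j) _) (auxI_nonneg _ _ _))
      refine le_trans ?_ t1
      have t2 : ∑ j ∈ S, (c / n) ^ r * auxI 0 j ω ≤ ∑ j ∈ S, pReal P j ^ r * auxI 0 j ω := by
        refine Finset.sum_le_sum (fun j hj => ?_)
        have := auxI_nonneg 0 j ω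
        have := (hS j hj).1.le
        gcongr
      refine le_trans ?_ t2
      rw [← Finset.mul_sum]
      calc c' * v / N = (c / n) ^ r * (κ / 2 * v) := by rw [hc', hN, div_pow]; ring
        _ ≤ (c / n) ^ r * (κ / 2 * S.card) := by gcongr
        _ ≤ _ := by gcongr
    set θ := missingMass (pReal P) r ω
    set t := gtEst ω r
    have hθ0 : 0 < c' * v / N := by positivity
    have hθp : 0 < θ := hθ0.trans_le hθ
    have hω : Real.sqrt K / c' < Real.sqrt v * mloss h t θ := hω
    rw [mloss, if_pos hθp] at hω
    have e1 : |t / θ - 1| = |t - θ| / θ := by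
      rw [div_sub_one hθp.ne', abs_div, abs_of_pos hθp]
    have hD : |t - θ| ≤ Real.sqrt K * Real.sqrt v / N := by
      refine abs_le_of_sq_le_sq ?_ (by positivity)
      rw [div_pow, mul_pow, Real.sq_sqrt hK0.le, Real.sq_sqrt hvpos.le]
      exact g2.le
    rw [e1] at hω
    have : Real.sqrt v * (|t - θ| / θ) ≤ Real.sqrt K / c' := by
      calc Real.sqrt v * (|t - θ| / θ) ≤
          Real.sqrt v * ((Real.sqrt K * Real.sqrt v / N) / (c' * v / N)) := by gcongr
        _ = (Real.sqrt v * Real.sqrt v) * Real.sqrt K / (c' * v) := by field_simp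
        _ = Real.sqrt K / c' := by rw [Real.mul_self_sqrt hvpos.le]; field_simp
    linarith
  refine (measure_mono hsub).trans ((measure_union_le _ _).trans ?_)
  refine (add_le_add m1 m2).trans (le_of_eq ?_)
  rw [← ENNReal.ofReal_add (by positivity) (by positivity), add_halves]

end
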